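/- arXiv:1303.6879 — 2 statements merged into one kernel-verified Lean document; each statement's English description precedes it below -/
import Mathlib

section
/- Let F : ℝ^n → ℝ^n be a C¹ map that is proper (the preimage of every compact set is compact) and whose derivative dF(x) is a linear isomorphism at every point x ∈ ℝ^n. Then F is bijective; in particular F is a C¹ diffeomorphism of ℝ^n. -/
/-!
By the inverse function theorem the map is a local homeomorphism. A proper local homeomorphism has
finite fibres and is closed, hence is a covering map. Since the base is simply connected, the
identity lifts to a global section, and by uniqueness of lifts on the connected total space this
section is a two-sided inverse.
-/

section Topology

variable {X Y : Type*} [TopologicalSpace X] [TopologicalSpace Y] {f : X → Y}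

theorem isCoveringMap_of_isProperMap_of_isLocalHomeomorph [T2Space X]
    (hproper : IsProperMap f) (hlocal : IsLocalHomeomorph f) : IsCoveringMap f := by
  have discrete_fiber (y : Y) : IsDiscrete (f ⁻¹' {y}) :=
    hlocal.isLocalHomeomorphOn.isDiscrete_of_image
      (Set.subsingleton_singleton.anti (Set.image_preimage_subset f {y})).isDiscrete
  have finite_fiber (y : Y) : (f ⁻¹' {y}).Finite :=
    (hproper.isCompact_preimage isCompact_singleton).finite (discrete_fiber y)
  exact isCoveringMap_iff_isCoveringMapOn_univ.mpr <|
    hproper.isClosedMap.isCoveringMapOn_of_isLocalHomeomorphOn (fun y _ ↦ finite_fiber y)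
      hlocal.isLocalHomeomorphOn

theorem isHomeomorph_of_isCoveringMap [ConnectedSpace X] [SimplyConnectedSpace Y]
    [LocallyPathConnectedSpace Y] (hf : IsCoveringMap f) : IsHomeomorph f := by
  obtain ⟨x₀⟩ : Nonempty X := inferInstance
  obtain ⟨g, ⟨hg₀, hfg⟩, -⟩ :=
    hf.existsUnique_continuousMap_lifts (ContinuousMap.id Y) (f x₀) x₀ rfl
  have hright : Function.RightInverse g f := congrFun hfg
  have hgf : g ∘ f = id :=
    hf.eq_of_comp_eq (g.continuous.comp hf.continuous) continuous_id
      (funext fun x ↦ hright (f x)) x₀ hg₀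
  have hleft : Function.LeftInverse g f := congrFun hgf
  exact ⟨hf.continuous, hf.isOpenMap, hleft.injective, hright.surjective⟩

end Topology

section Calculus

variable {𝕜 E F : Type*} [NontriviallyNormedField 𝕜] [NormedAddCommGroup E] [NormedSpace 𝕜 E]
  [NormedAddCommGroup F] [NormedSpace 𝕜 F] [CompleteSpace E]

theorem isInvertible_of_bijective [CompleteSpace F] {f : E →L[𝕜] F} (hf : Function.Bijective f) :
    f.IsInvertible :=
  ⟨.ofBijective f (LinearMap.ker_eq_bot.mpr hf.injective)
      (LinearMap.range_eq_top.mpr hf.surjective),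
    ContinuousLinearEquiv.coe_ofBijective ..⟩

theorem isLocalHomeomorph_of_hasStrictFDerivAt {f : E → F} {f' : E → E ≃L[𝕜] F}
    (hf : ∀ x, HasStrictFDerivAt f (f' x : E →L[𝕜] F) x) : IsLocalHomeomorph f :=
  fun x ↦ ⟨(hf x).toOpenPartialHomeomorph f, (hf x).mem_toOpenPartialHomeomorph_source, rfl⟩

end Calculus

theorem bijective_of_proper_of_isomorphic_derivative_general {𝕜 E F : Type*} [RCLike 𝕜]
    [NormedAddCommGroup E] [NormedSpace 𝕜 E] [CompleteSpace E]
    [NormedAddCommGroup F] [NormedSpace 𝕜 F] [CompleteSpace F]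
    {n : WithTop ℕ∞} (hn : n ≠ 0) {f : E → F} (hf : ContDiff 𝕜 n f)
    (hproper : ∀ K : Set F, IsCompact K → IsCompact (f ⁻¹' K))
    (hiso : ∀ x, Function.Bijective (fderiv 𝕜 f x)) :
    Function.Bijective f ∧
      ∃ g : F → E, ContDiff 𝕜 n g ∧ Function.LeftInverse g f ∧ Function.RightInverse g f := by
  -- the real structures make `E` connected and `F` simply connected
  let _ : NormedSpace ℝ E := .restrictScalars ℝ 𝕜 E
  let _ : NormedSpace ℝ F := .restrictScalars ℝ 𝕜 F
  choose f' hf' using fun x ↦ isInvertible_of_bijective (hiso x)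
  have hderiv (x : E) : HasStrictFDerivAt f (f' x : E →L[𝕜] F) x :=
    hf' x ▸ hf.contDiffAt.hasStrictFDerivAt hn
  have hcover : IsCoveringMap f :=
    isCoveringMap_of_isProperMap_of_isLocalHomeomorph
      (isProperMap_iff_isCompact_preimage.mpr ⟨hf.continuous, hproper⟩)
      (isLocalHomeomorph_of_hasStrictFDerivAt hderiv)
  let e : E ≃ₜ F := (isHomeomorph_of_isCoveringMap hcover).homeomorph f
  exact ⟨e.bijective, e.symm, e.contDiff_symm (fun x ↦ (hderiv x).hasFDerivAt) hf,
    e.left_inv, e.right_inv⟩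

/-- A proper `C¹` map `F : ℝⁿ → ℝⁿ` whose derivative is a linear
isomorphism at every point is bijective; in particular it is a `C¹` diffeomorphism. -/
theorem bijective_of_proper_of_isomorphic_derivative {n : ℕ}
    (F : EuclideanSpace ℝ (Fin n) → EuclideanSpace ℝ (Fin n))
    (hF : ContDiff ℝ 1 F)
    (hproper : ∀ K : Set (EuclideanSpace ℝ (Fin n)), IsCompact K → IsCompact (F ⁻¹' K))
    (hiso : ∀ x, Function.Bijective (fderiv ℝ F x)) :
    Function.Bijective F ∧
      ∃ G : EuclideanSpace ℝ (Fin n) → EuclideanSpace ℝ (Fin n),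
        ContDiff ℝ 1 G ∧ Function.LeftInverse G F ∧ Function.RightInverse G F :=
  bijective_of_proper_of_isomorphic_derivative_general one_ne_zero hF hproper hiso
end

section
/- Let F = (f₁,…,f_k) : ℝ^n → ℝ^k, k ≥ 2, be a polynomial mapping with every f_j nonconstant and f_j(0) = 0. Then N(F) ⊆ ℝ^k ∖ (ℝ∖{0})^k, and N(F) = ℝ^k ∖ (ℝ∖{0})^k if and only if for every j ∈ {1,…,k} there exists p ∈ ℤ^n with minᵢ pᵢ < 0 such that J_p = {j}. -/
open MvPolynomial

/-- The linear form `l_p(ν) = ∑ i, p i * ν i`. -/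
def lP {n : ℕ} (p : Fin n → ℤ) (ν : Fin n →₀ ℕ) : ℤ := ∑ i, p i * (ν i : ℤ)

/-- `J_p = {j : l_p(ν) > 0 for all ν ∈ supp(f_j)}`. -/
def Jset {n k : ℕ} (p : Fin n → ℤ) (f : Fin k → MvPolynomial (Fin n) ℝ) :
    Set (Fin k) :=
  { j | ∀ ν ∈ (f j).support, 0 < lP p ν }

/-- The set `N(F)`. -/
def NF {n k : ℕ} (f : Fin k → MvPolynomial (Fin n) ℝ) :
    Set (EuclideanSpace ℝ (Fin k)) :=
  { c | ∃ p : Fin n → ℤ, (∃ i, p i < 0) ∧ (Jset p f).Nonempty ∧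
      ∀ j ∈ Jset p f, c j = 0 }

/-!
A vector `c` lies in `N(F)` exactly when its zero set contains some nonempty `J_p`. Testing a vector
that vanishes at the coordinate `j` alone forces `J_p = {j}` for some `p`, since `{j}` has no other
nonempty subset; conversely, the singletons `{j}` account for every `c` with a zero coordinate.
-/

/-- The union, over the nonempty `J ∈ 𝒥`, of the coordinate subspaces `{c | c = 0 on J}` of `ι → R`.
For the sets `J_p` of a polynomial mapping `F`, with `minᵢ pᵢ < 0`, this is `N(F)`. -/
def coordArrangement {ι : Type*} (R : Type*) [Zero R] (𝒥 : Set (Set ι)) : Set (ι → R) :=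
  { c | ∃ J ∈ 𝒥, J.Nonempty ∧ ∀ j ∈ J, c j = 0 }

section CoordArrangement

variable {ι : Type*} (R : Type*) [Zero R]

theorem coordArrangement_subset_setOf_exists_eq_zero (𝒥 : Set (Set ι)) :
    coordArrangement R 𝒥 ⊆ { c | ∃ j, c j = 0 } := by
  rintro c ⟨J, -, ⟨j, hj⟩, hc⟩
  exact ⟨j, hc j hj⟩

theorem exists_forall_eq_zero_iff_mem [Nontrivial R] (Z : Set ι) :
    ∃ c : ι → R, ∀ i, c i = 0 ↔ i ∈ Z := by
  obtain ⟨r, hr⟩ := exists_ne (0 : R)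
  exact ⟨Zᶜ.indicator fun _ ↦ r, fun i ↦ by simp [Set.indicator_apply_eq_zero, hr]⟩

theorem setOf_exists_eq_zero_subset_coordArrangement_iff [Nontrivial R] {𝒥 : Set (Set ι)} :
    { c | ∃ j, c j = 0 } ⊆ coordArrangement R 𝒥 ↔ ∀ j, {j} ∈ 𝒥 := by
  constructor
  · intro h j
    obtain ⟨c, hc⟩ := exists_forall_eq_zero_iff_mem R {j}
    obtain ⟨J, hJ, hne, hJc⟩ := h ⟨j, (hc j).2 rfl⟩
    have hJj : J = {j} := hne.subset_singleton_iff.1 fun i hi ↦ (hc i).1 (hJc i hi)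
    exact hJj ▸ hJ
  · rintro h c ⟨j, hj⟩
    exact ⟨{j}, h j, Set.singleton_nonempty j, by simpa using hj⟩

theorem NF_subset_and_eq_iff_general [Nontrivial R] (𝒥 : Set (Set ι)) :
    coordArrangement R 𝒥 ⊆ { c | ∃ j, c j = 0 } ∧
      (coordArrangement R 𝒥 = { c | ∃ j, c j = 0 } ↔ ∀ j, {j} ∈ 𝒥) := by
  have hsub := coordArrangement_subset_setOf_exists_eq_zero R 𝒥
  exact ⟨hsub, hsub.ge_iff_eq.symm.trans (setOf_exists_eq_zero_subset_coordArrangement_iff R)⟩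

end CoordArrangement

theorem NF_eq_preimage_coordArrangement {n k : ℕ} (f : Fin k → MvPolynomial (Fin n) ℝ) :
    NF f = WithLp.ofLp ⁻¹' coordArrangement ℝ ((Jset · f) '' { p | ∃ i, p i < 0 }) := by
  ext c
  simp [NF, coordArrangement]

/-- For `k ≥ 2`, one has `N(F) ⊆ ℝᵏ ∖ (ℝ∖{0})ᵏ`, with equality if and
only if for every `j` there is `p ∈ ℤⁿ` with `min_i p_i < 0` and `J_p = {j}`. -/
theorem NF_subset_and_eq_iff {n k : ℕ} (hk : 2 ≤ k)
    (f : Fin k → MvPolynomial (Fin n) ℝ)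
    (hnc : ∀ j, (f j).totalDegree ≠ 0)
    (h0 : ∀ j, eval (0 : Fin n → ℝ) (f j) = 0) :
    NF f ⊆ { c : EuclideanSpace ℝ (Fin k) | ∃ j, c j = 0 } ∧
      (NF f = { c : EuclideanSpace ℝ (Fin k) | ∃ j, c j = 0 } ↔
        ∀ j : Fin k, ∃ p : Fin n → ℤ, (∃ i, p i < 0) ∧ Jset p f = {j}) := by
  obtain ⟨hsub, heq⟩ := NF_subset_and_eq_iff_general ℝ ((Jset · f) '' { p | ∃ i, p i < 0 })
  rw [NF_eq_preimage_coordArrangement]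
  exact ⟨Set.preimage_mono hsub, ((WithLp.ofLp_surjective 2).preimage_injective.eq_iff).trans heq⟩
end
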